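/- arXiv:2202.04722 — 2 statements merged into one kernel-verified Lean document; each statement's English description precedes it below -/
import Mathlib

section
/- Let 0 ≤ α < 1/2, N a positive integer, h = 2π/(2N+1), and let x̃_{−N},…,x̃_N be a set of α-perturbed nodes. Fix −N ≤ j ≤ N, and for −N ≤ k ≤ N set x_k = x̃_j + (k−j)h. Let ℓ_j be the trigonometric Lagrange basis polynomial at x̃_j associated with the nodes. For 1 ≤ d ≤ N, let k₁ ≠ k₂ be the two indices in {−N,…,N}∖{j} with circular distance d(j,k₁) = d(j,k₂) = d. Then |ℓ_j(x_{k₁}) + ℓ_j(x_{k₂})| ≤ (πα/d) · ∏_{m=1}^{N} (m+α)²/((m−2α)m). -/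
open Real Finset

/-- `x` is a set of α-perturbed nodes of size 2N+1. -/
def PerturbedNodes (N : ℕ) (α : ℝ) (x : ℤ → ℝ) : Prop :=
  ∀ j ∈ Finset.Icc (-(N:ℤ)) (N:ℤ),
    |x j - (j : ℝ) * (2*π/(2*N+1))| ≤ α * (2*π/(2*N+1))

/-- The trigonometric Lagrange basis polynomial at the node `x j` associated with the
nodes `x m`, `−N ≤ m ≤ N`. -/
noncomputable def lagrange (N : ℕ) (x : ℤ → ℝ) (j : ℤ) (y : ℝ) : ℝ :=
  ∏ m ∈ (Finset.Icc (-(N:ℤ)) (N:ℤ)).erase j,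
    Real.sin ((y - x m) / 2) / Real.sin ((x j - x m) / 2)

/-!
Continue the nodes to all integer indices by `X (m + 2N + 1) = X m + 2π`. Since `2N + 1` is odd,
`(-1)^m sin ((y - X m) / 2)` is then periodic in `m`, so the numerator of `ℓ_j (x_k)` may be taken
over indices symmetric about `k` and the denominator over indices symmetric about `j`. This gives
`ℓ_j (x_k) = s_k / w (k - j) * A_k`, where `s_k = sin ((x_k - X k) / 2)`,
`w t = (-1)^t sin (t h / 2)`, and `A_k` is a product over `1 ≤ q ≤ N` of ratios of positive factors
`sin ((X (k + q) - y) / 2) * sin ((y - X (k - q)) / 2)`, one for each pair of nodes.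

By product-to-sum, each such factor lies between `sin (q h / 2) * sin ((q - 2α) h / 2)` and
`sin ((q + α) h / 2) ^ 2`; as `sin t / t` decreases, `A_k` is at most the product in the theorem.
Finally `w` is odd and periodic, so `w (k₁ - j) = -w (k₂ - j)` and the sum of the two values is
`(s₁ A₁ - s₂ A₂) / w (k₁ - j)`. The numbers `s₁`, `s₂` and `s₁ - s₂` are all at most `α h` in
absolute value, and `|w (k₁ - j)| ≥ 2d / (2N + 1)` by Jordan's inequality.
-/

section PeriodicProducts

lemma prod_Icc_neg_erase_zero {M : Type*} [CommMonoid M] (f : ℤ → M) (N : ℕ) :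
    ∏ q ∈ (Icc (-(N : ℤ)) N).erase 0, f q = ∏ q ∈ Icc 1 N, f q * f (-q) := by
  induction N with
  | zero => simp
  | succ N ih =>
    have hIcc : (Icc (-((N + 1 : ℕ) : ℤ)) ((N + 1 : ℕ) : ℤ)).erase 0 =
        insert ((N + 1 : ℕ) : ℤ) (insert (-((N + 1 : ℕ) : ℤ)) ((Icc (-(N : ℤ)) N).erase 0)) := by
      ext m
      simp only [mem_erase, mem_Icc, mem_insert]
      omega
    rw [hIcc, prod_insert (by simp only [mem_insert, mem_erase, mem_Icc]; omega),
      prod_insert (by simp only [mem_erase, mem_Icc]; omega), ih,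
      prod_Icc_succ_top (by omega), ← mul_assoc, mul_comm]

lemma bmod_mem_Icc (N : ℕ) (m : ℤ) : m.bmod (2 * N + 1) ∈ Icc (-(N : ℤ)) N := by
  have hle := Int.le_bmod (x := m) (m := 2 * N + 1) (by omega)
  have hlt := Int.bmod_lt (x := m) (m := 2 * N + 1) (by omega)
  rw [mem_Icc]
  omega

lemma bmod_eq_self_of_mem_Icc {N : ℕ} {m : ℤ} (hm : m ∈ Icc (-(N : ℤ)) N) :
    m.bmod (2 * N + 1) = m := by
  rw [mem_Icc] at hm
  exact Int.bmod_eq_of_le_mul_two (by omega) (by omega)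

lemma apply_bmod_of_periodic {β : Type*} {f : ℤ → β} {n : ℕ} (hf : Function.Periodic f n)
    (m : ℤ) : f (m.bmod n) = f m := by
  rw [Int.bmod_eq_self_sub_bdiv_mul]
  exact hf.sub_int_mul_eq _

lemma prod_erase_of_periodic {M : Type*} [CommMonoid M] {f : ℤ → M} {N : ℕ}
    (hf : Function.Periodic f (2 * N + 1 : ℕ)) {k : ℤ} (hk : k ∈ Icc (-(N : ℤ)) N) :
    ∏ m ∈ (Icc (-(N : ℤ)) N).erase k, f m = ∏ q ∈ Icc 1 N, f (k + q) * f (k - q) := by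
  simp only [sub_eq_add_neg]
  rw [← prod_Icc_neg_erase_zero (fun q => f (k + q))]
  refine prod_nbij' (fun m => (m - k).bmod (2 * N + 1)) (fun q => (k + q).bmod (2 * N + 1))
    ?_ ?_ ?_ ?_ ?_
  · intro m hm
    obtain ⟨hmk, hm⟩ := mem_erase.1 hm
    refine mem_erase.2 ⟨fun h0 => hmk ?_, bmod_mem_Icc N _⟩
    rw [← bmod_eq_self_of_mem_Icc hm, Int.bmod_eq_bmod_iff_bmod_sub_eq_zero.2 h0,
      bmod_eq_self_of_mem_Icc hk]
  · intro q hq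
    obtain ⟨hq0, hq⟩ := mem_erase.1 hq
    refine mem_erase.2 ⟨fun hkq => hq0 ?_, bmod_mem_Icc N _⟩
    rw [← bmod_eq_self_of_mem_Icc hq, ← add_sub_cancel_left k q,
      ← Int.bmod_eq_bmod_iff_bmod_sub_eq_zero, hkq, bmod_eq_self_of_mem_Icc hk]
  · intro m hm
    simp only [Int.add_bmod_bmod, add_sub_cancel]
    exact bmod_eq_self_of_mem_Icc (mem_of_mem_erase hm)
  · intro q hq
    simp only [Int.bmod_sub_bmod, add_sub_cancel_left]
    exact bmod_eq_self_of_mem_Icc (mem_of_mem_erase hq)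
  · intro m _
    rw [← apply_bmod_of_periodic hf (k + _), Int.add_bmod_bmod, add_sub_cancel,
      apply_bmod_of_periodic hf]

end PeriodicProducts

section SineInequalities

lemma sin_mul_sin_le_sin_mul_sin {a b a' b' : ℝ} (h0 : 0 ≤ a + b) (hsum : a + b ≤ a' + b')
    (hsumπ : a' + b' ≤ π) (hdiff : |a' - b'| ≤ |a - b|) (hdiffπ : |a - b| ≤ π) :
    sin a * sin b ≤ sin a' * sin b' := by
  have hcos_sum : cos (a' + b') ≤ cos (a + b) := cos_le_cos_of_nonneg_of_le_pi h0 hsumπ hsum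
  have hcos_diff : cos (a - b) ≤ cos (a' - b') := by
    rw [← cos_abs (a - b), ← cos_abs (a' - b')]
    exact cos_le_cos_of_nonneg_of_le_pi (abs_nonneg _) hdiffπ hdiff
  linarith [two_mul_sin_mul_sin a b, two_mul_sin_mul_sin a' b']

lemma sin_le_sin_of_le_pi_sub {x y : ℝ} (hx : 0 ≤ x) (hxy : x ≤ y) (hy : y ≤ π - x) :
    sin x ≤ sin y := by
  rcases le_total y (π / 2) with h | h
  · exact sin_le_sin_of_le_of_le_pi_div_two (by linarith) h hxy
  · rw [← sin_pi_sub y]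
    exact sin_le_sin_of_le_of_le_pi_div_two (by linarith) (by linarith) (by linarith)

lemma sin_div_sin_le_div {x y : ℝ} (hx : 0 < x) (hxy : x ≤ y) (hy : y < π) :
    sin y / sin x ≤ y / x := by
  have hy0 : 0 < y := hx.trans_le hxy
  have hslope : sin y / y ≤ sin x / x := by
    simpa [neg_div] using strictConcaveOn_sin_Icc.concaveOn.neg.secant_mono (a := 0)
      ⟨le_rfl, pi_nonneg⟩ ⟨hx.le, hxy.trans hy.le⟩ ⟨hy0.le, hy.le⟩ hx.ne' hy0.ne' hxy
  have hsin : 0 < sin x := sin_pos_of_pos_of_lt_pi hx (hxy.trans_lt hy)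
  rw [div_le_div_iff₀ hy0 hx] at hslope
  rw [div_le_div_iff₀ hsin hx]
  linarith

lemma mul_min_abs_le_abs_sin (x : ℝ) : 2 / π * min |x| (π - |x|) ≤ |sin x| := by
  rcases le_total |x| (π / 2) with hx | hx
  · exact (mul_le_mul_of_nonneg_left (min_le_left _ _) (by positivity)).trans
      (mul_abs_le_abs_sin hx)
  · have hsin : sin (π - |x|) ≤ |sin x| := by
      rw [sin_pi_sub]
      rcases abs_choice x with h | h <;> rw [h]
      · exact le_abs_self _
      · rw [sin_neg]
        exact neg_le_abs _
    refine (mul_le_mul_of_nonneg_left (min_le_right _ _) (by positivity)).trans ?_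
    rcases le_total |x| π with hxπ | hxπ
    · exact (mul_le_sin (by linarith) (by linarith)).trans hsin
    · exact (mul_nonpos_of_nonneg_of_nonpos (by positivity) (by linarith)).trans (abs_nonneg _)

end SineInequalities

lemma abs_mul_sub_mul_le {s t A B M P : ℝ} (hA : 0 ≤ A) (hB : 0 ≤ B) (hAP : A ≤ P) (hBP : B ≤ P)
    (hs : |s| ≤ M) (ht : |t| ≤ M) (hst : |s - t| ≤ M) : |s * A - t * B| ≤ M * P := by
  wlog hBA : B ≤ A generalizing s t A B
  · rw [abs_sub_comm] at hst ⊢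
    exact this hB hA hBP hAP ht hs hst (le_of_not_ge hBA)
  have hM : 0 ≤ M := (abs_nonneg s).trans hs
  calc |s * A - t * B| = |s * (A - B) + (s - t) * B| := by ring_nf
    _ ≤ |s| * (A - B) + |s - t| * B := by
      refine (abs_add_le _ _).trans_eq ?_
      rw [abs_mul, abs_mul, abs_of_nonneg (sub_nonneg.2 hBA), abs_of_nonneg hB]
    _ ≤ M * (A - B) + M * B := by gcongr
    _ = M * A := by ring
    _ ≤ M * P := by gcongr

section Nodes

/-- The grid spacing `h = 2π / (2N + 1)`. -/
noncomputable def gridStep (N : ℕ) : ℝ := 2 * π / (2 * N + 1)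

lemma gridStep_pos (N : ℕ) : 0 < gridStep N := by
  unfold gridStep
  positivity

lemma mul_gridStep (N : ℕ) : (2 * N + 1) * gridStep N = 2 * π := by
  unfold gridStep
  field_simp

lemma add_mul_gridStep_le_pi {N q : ℕ} {α : ℝ} (hα : α < 1 / 2) (hq : q ≤ N) :
    (q + α) * gridStep N ≤ π := by
  have hqN : (q : ℝ) ≤ N := by exact_mod_cast hq
  nlinarith [gridStep_pos N, mul_gridStep N]

lemma sin_mul_gridStep_div_two_pos {N : ℕ} {t : ℝ} (ht0 : 0 < t) (ht : t < 2 * N + 1) :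
    0 < sin (t * gridStep N / 2) := by
  apply sin_pos_of_pos_of_lt_pi <;> nlinarith [gridStep_pos N, mul_gridStep N]

/-- Nodes indexed by all integers: each stays within `α h` of its grid point, and shifting the
index by `2N + 1` moves the node by a full turn. -/
structure PeriodicPerturbedNodes (N : ℕ) (α : ℝ) (X : ℤ → ℝ) : Prop where
  add_period : ∀ m, X (m + (2 * N + 1 : ℕ)) = X m + 2 * π
  abs_sub_le : ∀ m, |X m - m * gridStep N| ≤ α * gridStep N

/-- The continuation of the nodes `x m`, `-N ≤ m ≤ N`, to all integer indices; `Int.bmod` picks the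
representative of `m` in `[-N, N]`. -/
noncomputable def periodicContinuation (N : ℕ) (x : ℤ → ℝ) (m : ℤ) : ℝ :=
  x (m.bmod (2 * N + 1)) + (m - m.bmod (2 * N + 1)) * gridStep N

lemma periodicContinuation_of_mem {N : ℕ} (x : ℤ → ℝ) {m : ℤ} (hm : m ∈ Icc (-(N : ℤ)) N) :
    periodicContinuation N x m = x m := by
  simp [periodicContinuation, bmod_eq_self_of_mem_Icc hm]

lemma PerturbedNodes.periodicPerturbedNodes {N : ℕ} {α : ℝ} {x : ℤ → ℝ}
    (hx : PerturbedNodes N α x) : PeriodicPerturbedNodes N α (periodicContinuation N x) where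
  add_period m := by
    simp only [periodicContinuation, Int.add_bmod_right]
    push_cast
    linear_combination mul_gridStep N
  abs_sub_le m := by
    set r := m.bmod (2 * N + 1) with hr
    have hclose : |x r - r * gridStep N| ≤ α * gridStep N := hx r (bmod_mem_Icc N m)
    have hshift : periodicContinuation N x m - m * gridStep N = x r - r * gridStep N := by
      rw [periodicContinuation, ← hr]
      ring
    rwa [hshift]

lemma lagrange_periodicContinuation {N : ℕ} (x : ℤ → ℝ) {j : ℤ} (hj : j ∈ Icc (-(N : ℤ)) N)
    (y : ℝ) :
    lagrange N (periodicContinuation N x) j y = lagrange N x j y :=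
  prod_congr rfl fun m hm => by
    rw [periodicContinuation_of_mem x hj, periodicContinuation_of_mem x (mem_of_mem_erase hm)]

end Nodes

section Factorization

variable {N : ℕ} {X : ℤ → ℝ}

/-- The factor of the node `X m` in the nodal polynomial at `y`; the sign makes it periodic in `m`
with odd period `2N + 1`. -/
noncomputable def nodeFactor (X : ℤ → ℝ) (y : ℝ) (m : ℤ) : ℝ := (-1) ^ m * sin ((y - X m) / 2)

/-- The contribution at `y` of the two nodes at index distance `q` from `k`, normalized to be
positive for `y` near `X k`. -/
noncomputable def pairFactor (X : ℤ → ℝ) (k : ℤ) (y : ℝ) (q : ℕ) : ℝ :=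
  sin ((X (k + q) - y) / 2) * sin ((y - X (k - q)) / 2)

lemma nodeFactor_periodic (hX : ∀ m, X (m + (2 * N + 1 : ℕ)) = X m + 2 * π) (y : ℝ) :
    Function.Periodic (nodeFactor X y) (2 * N + 1 : ℕ) := by
  intro m
  have hodd : Odd ((2 * N + 1 : ℕ) : ℤ) := ⟨N, by push_cast; ring⟩
  have hshift : (y - (X m + 2 * π)) / 2 = (y - X m) / 2 - π := by ring
  simp only [nodeFactor]
  rw [hX, hshift, sin_sub_pi, zpow_add₀ (by norm_num), hodd.neg_one_zpow]
  ring

lemma nodeFactor_add_mul_nodeFactor_sub (X : ℤ → ℝ) (y : ℝ) (k : ℤ) (q : ℕ) :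
    nodeFactor X y (k + q) * nodeFactor X y (k - q) = -pairFactor X k y q := by
  have hsign : (-1 : ℝ) ^ (k + q) * (-1) ^ (k - q) = 1 := by
    rw [← zpow_add₀ (by norm_num), show k + q + (k - q) = 2 * k by ring]
    exact (even_two_mul k).neg_one_zpow
  have hneg : (y - X (k + q)) / 2 = -((X (k + q) - y) / 2) := by ring
  simp only [nodeFactor, pairFactor, hneg, sin_neg]
  linear_combination (-(sin ((X (k + q) - y) / 2) * sin ((y - X (k - q)) / 2))) * hsign

lemma prod_erase_nodeFactor (hX : ∀ m, X (m + (2 * N + 1 : ℕ)) = X m + 2 * π) {k : ℤ}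
    (hk : k ∈ Icc (-(N : ℤ)) N) (y : ℝ) :
    ∏ m ∈ (Icc (-(N : ℤ)) N).erase k, nodeFactor X y m =
      ∏ q ∈ Icc 1 N, -pairFactor X k y q := by
  rw [prod_erase_of_periodic (nodeFactor_periodic hX y) hk]
  exact prod_congr rfl fun q _ => nodeFactor_add_mul_nodeFactor_sub X y k q

lemma lagrange_eq_prod_pairFactor (hX : ∀ m, X (m + (2 * N + 1 : ℕ)) = X m + 2 * π) {j k : ℤ}
    (hj : j ∈ Icc (-(N : ℤ)) N) (hk : k ∈ Icc (-(N : ℤ)) N) {y : ℝ}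
    (hy : nodeFactor X y j ≠ 0) :
    lagrange N X j y = nodeFactor X y k / nodeFactor X y j *
      ∏ q ∈ Icc 1 N, pairFactor X k y q / pairFactor X j (X j) q := by
  have hswap : nodeFactor X y j * ∏ m ∈ (Icc (-(N : ℤ)) N).erase j, nodeFactor X y m =
      nodeFactor X y k * ∏ m ∈ (Icc (-(N : ℤ)) N).erase k, nodeFactor X y m := by
    rw [mul_prod_erase _ _ hj, mul_prod_erase _ _ hk]
  calc lagrange N X j y
      = ∏ m ∈ (Icc (-(N : ℤ)) N).erase j, nodeFactor X y m / nodeFactor X (X j) m :=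
        prod_congr rfl fun m _ => (mul_div_mul_left _ _ (zpow_ne_zero m (by norm_num))).symm
    _ = nodeFactor X y k / nodeFactor X y j *
        ((∏ m ∈ (Icc (-(N : ℤ)) N).erase k, nodeFactor X y m) /
          ∏ m ∈ (Icc (-(N : ℤ)) N).erase j, nodeFactor X (X j) m) := by
        rw [prod_div_distrib, div_mul_div_comm, ← hswap, mul_div_mul_left _ _ hy]
    _ = _ := by
        rw [prod_erase_nodeFactor hX hk, prod_erase_nodeFactor hX hj, ← prod_div_distrib]
        simp only [neg_div_neg_eq]

/-- The paper's point `x_k = x̃_j + (k - j) h`. -/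
noncomputable def shiftedPoint (N : ℕ) (X : ℤ → ℝ) (j k : ℤ) : ℝ := X j + (k - j) * gridStep N

/-- The product of the quotients of the pair factors at `x_k` by those at the node `X j`: the
positive part of `ℓ_j (x_k)`. -/
noncomputable def pairFactorRatio (N : ℕ) (X : ℤ → ℝ) (j k : ℤ) : ℝ :=
  ∏ q ∈ Icc 1 N, pairFactor X k (shiftedPoint N X j k) q / pairFactor X j (X j) q

/-- The sine of half of `t` grid steps; the sign makes it periodic in `t` with odd period
`2N + 1`. -/
noncomputable def alternatingSine (N : ℕ) (t : ℤ) : ℝ := (-1) ^ t * sin (t * gridStep N / 2)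

lemma nodeFactor_grid (N : ℕ) (t : ℤ) :
    nodeFactor (fun m => m * gridStep N) 0 t = -alternatingSine N t := by
  simp only [nodeFactor, alternatingSine, zero_sub, neg_div, sin_neg, mul_neg]

lemma alternatingSine_periodic (N : ℕ) :
    Function.Periodic (alternatingSine N) (2 * N + 1 : ℕ) := by
  intro t
  have hgrid := nodeFactor_periodic (N := N) (X := fun m => m * gridStep N)
    (fun m => by push_cast; linear_combination mul_gridStep N) 0 t
  simpa only [nodeFactor_grid, neg_inj] using hgrid

lemma alternatingSine_neg (N : ℕ) (t : ℤ) : alternatingSine N (-t) = -alternatingSine N t := by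
  simp only [alternatingSine, zpow_neg, ← inv_zpow, inv_neg_one, Int.cast_neg, neg_mul, neg_div,
    sin_neg, mul_neg]

lemma alternatingSine_eq_neg_of_dvd_add {N : ℕ} {s t : ℤ}
    (hst : ((2 * N + 1 : ℕ) : ℤ) ∣ s + t) : alternatingSine N s = -alternatingSine N t := by
  obtain ⟨u, hu⟩ := hst
  rw [← alternatingSine_neg, eq_neg_add_of_add_eq ((add_comm t s).trans hu), mul_comm]
  exact (alternatingSine_periodic N).int_mul u (-t)

lemma mul_gridStep_div_pi_le_abs_alternatingSine {N : ℕ} {t d : ℤ}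
    (hd : min |t| (2 * N + 1 - |t|) = d) : d * gridStep N / π ≤ |alternatingSine N t| := by
  have habs : |t * gridStep N / 2| = |(t : ℝ)| * (gridStep N / 2) := by
    rw [mul_div_assoc, abs_mul, abs_of_pos (half_pos (gridStep_pos N))]
  have hmin : min |(t : ℝ)| (2 * N + 1 - |(t : ℝ)|) = d := by exact_mod_cast hd
  have hπ : π - |(t : ℝ)| * (gridStep N / 2) = (2 * N + 1 - |(t : ℝ)|) * (gridStep N / 2) := by
    linarith [mul_gridStep N]
  calc d * gridStep N / π = 2 / π * (d * (gridStep N / 2)) := by ring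
    _ = 2 / π * min |t * gridStep N / 2| (π - |t * gridStep N / 2|) := by
      rw [habs, hπ, ← min_mul_of_nonneg _ _ (half_pos (gridStep_pos N)).le, hmin]
    _ ≤ |sin (t * gridStep N / 2)| := mul_min_abs_le_abs_sin _
    _ = |alternatingSine N t| := by rw [alternatingSine, abs_mul, abs_neg_one_zpow, one_mul]

lemma lagrange_shiftedPoint (hX : ∀ m, X (m + (2 * N + 1 : ℕ)) = X m + 2 * π) {j k : ℤ}
    (hj : j ∈ Icc (-(N : ℤ)) N) (hk : k ∈ Icc (-(N : ℤ)) N)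
    (hne : alternatingSine N (k - j) ≠ 0) :
    lagrange N X j (shiftedPoint N X j k) =
      sin ((shiftedPoint N X j k - X k) / 2) / alternatingSine N (k - j) *
        pairFactorRatio N X j k := by
  have hsign : (-1 : ℝ) ^ j = (-1) ^ k * (-1) ^ (k - j) := by
    rw [← zpow_add₀ (by norm_num), show k + (k - j) = 2 * (k - j) + j by ring,
      zpow_add₀ (by norm_num), (even_two_mul _).neg_one_zpow, one_mul]
  have hfactor : nodeFactor X (shiftedPoint N X j k) j = (-1) ^ k * alternatingSine N (k - j) := by
    rw [nodeFactor, alternatingSine, shiftedPoint, add_sub_cancel_left, hsign, mul_assoc,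
      Int.cast_sub]
  have hpow : (-1 : ℝ) ^ k ≠ 0 := zpow_ne_zero k (by norm_num)
  rw [lagrange_eq_prod_pairFactor hX hj hk (hfactor ▸ mul_ne_zero hpow hne), hfactor, nodeFactor,
    mul_div_mul_left _ _ hpow, pairFactorRatio]

lemma lagrange_shiftedPoint_add_lagrange_shiftedPoint
    (hX : ∀ m, X (m + (2 * N + 1 : ℕ)) = X m + 2 * π) {j k₁ k₂ : ℤ}
    (hj : j ∈ Icc (-(N : ℤ)) N) (hk₁ : k₁ ∈ Icc (-(N : ℤ)) N) (hk₂ : k₂ ∈ Icc (-(N : ℤ)) N)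
    (hopp : ((2 * N + 1 : ℕ) : ℤ) ∣ (k₁ - j) + (k₂ - j)) (hne : alternatingSine N (k₁ - j) ≠ 0) :
    lagrange N X j (shiftedPoint N X j k₁) + lagrange N X j (shiftedPoint N X j k₂) =
      (sin ((shiftedPoint N X j k₁ - X k₁) / 2) * pairFactorRatio N X j k₁ -
        sin ((shiftedPoint N X j k₂ - X k₂) / 2) * pairFactorRatio N X j k₂) /
          alternatingSine N (k₁ - j) := by
  have hneg : alternatingSine N (k₂ - j) = -alternatingSine N (k₁ - j) :=
    alternatingSine_eq_neg_of_dvd_add (by rwa [add_comm (k₂ - j)])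
  rw [lagrange_shiftedPoint hX hj hk₁ hne,
    lagrange_shiftedPoint hX hj hk₂ (by rwa [hneg, neg_ne_zero]), hneg]
  ring

end Factorization

namespace PeriodicPerturbedNodes

variable {N : ℕ} {α : ℝ} {X : ℤ → ℝ}

lemma nonneg (hX : PeriodicPerturbedNodes N α X) : 0 ≤ α :=
  nonneg_of_mul_nonneg_left ((abs_nonneg _).trans (hX.abs_sub_le 0)) (gridStep_pos N)

lemma pairFactor_le (hX : PeriodicPerturbedNodes N α X) (hα : α < 1 / 2) {k : ℤ} {y : ℝ}
    (hy : |y - k * gridStep N| ≤ α * gridStep N) {q : ℕ} (hq : q ∈ Icc 1 N) :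
    pairFactor X k y q ≤ sin ((q + α) * gridStep N / 2) ^ 2 := by
  have hq' : (1 : ℝ) ≤ q ∧ (q : ℝ) ≤ N := by exact_mod_cast mem_Icc.1 hq
  have hπ := add_mul_gridStep_le_pi hα (mem_Icc.1 hq).2
  have hstep := gridStep_pos N
  have hright := abs_le.1 (hX.abs_sub_le (k + q))
  have hleft := abs_le.1 (hX.abs_sub_le (k - q))
  push_cast at hright hleft
  rw [abs_le] at hy
  rw [sq]
  apply sin_mul_sin_le_sin_mul_sin
  · nlinarith
  · linarith
  · linarith
  · simp
  · rw [abs_le]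
    constructor <;> nlinarith

lemma le_pairFactor (hX : PeriodicPerturbedNodes N α X) (hα : α < 1 / 2) {k : ℤ} {y : ℝ}
    (hy : |y - k * gridStep N| ≤ α * gridStep N) {q : ℕ} (hq : q ∈ Icc 1 N) :
    sin (q * gridStep N / 2) * sin ((q - 2 * α) * gridStep N / 2) ≤ pairFactor X k y q := by
  have hq' : (1 : ℝ) ≤ q ∧ (q : ℝ) ≤ N := by exact_mod_cast mem_Icc.1 hq
  have hπ := add_mul_gridStep_le_pi hα (mem_Icc.1 hq).2
  have hstep := gridStep_pos N
  have hright := abs_le.1 (hX.abs_sub_le (k + q))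
  have hleft := abs_le.1 (hX.abs_sub_le (k - q))
  push_cast at hright hleft
  obtain ⟨δ, rfl⟩ : ∃ δ, y = k * gridStep N + δ := ⟨_, (add_sub_cancel _ _).symm⟩
  rw [add_sub_cancel_left] at hy
  have hδ := abs_le.1 hy
  have hα_step : α * gridStep N < gridStep N / 2 := by nlinarith
  have hq_step : gridStep N ≤ q * gridStep N := by nlinarith
  have hdiff : |((q - α) * gridStep N - δ) / 2 - ((q - α) * gridStep N + δ) / 2| ≤
      |q * gridStep N / 2 - (q - 2 * α) * gridStep N / 2| := by
    ring_nf
    rw [abs_neg]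
    exact hy.trans (le_abs_self _)
  calc sin (q * gridStep N / 2) * sin ((q - 2 * α) * gridStep N / 2)
      ≤ sin (((q - α) * gridStep N - δ) / 2) * sin (((q - α) * gridStep N + δ) / 2) := by
        apply sin_mul_sin_le_sin_mul_sin _ _ _ hdiff
        · rw [abs_le]
          constructor <;> linarith
        · linarith
        · linarith
        · linarith
    _ ≤ pairFactor X k (k * gridStep N + δ) q := by
        apply mul_le_mul
        · exact sin_le_sin_of_le_pi_sub (by linarith) (by linarith) (by linarith)
        · exact sin_le_sin_of_le_pi_sub (by linarith) (by linarith) (by linarith)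
        · exact sin_nonneg_of_nonneg_of_le_pi (by linarith) (by linarith)
        · exact sin_nonneg_of_nonneg_of_le_pi (by linarith) (by linarith)

lemma pairFactor_pos (hX : PeriodicPerturbedNodes N α X) (hα : α < 1 / 2) {k : ℤ} {y : ℝ}
    (hy : |y - k * gridStep N| ≤ α * gridStep N) {q : ℕ} (hq : q ∈ Icc 1 N) :
    0 < pairFactor X k y q := by
  have hα0 := hX.nonneg
  have hq' : (1 : ℝ) ≤ q ∧ (q : ℝ) ≤ N := by exact_mod_cast mem_Icc.1 hq
  exact (mul_pos (sin_mul_gridStep_div_two_pos (by linarith) (by linarith))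
    (sin_mul_gridStep_div_two_pos (by linarith) (by linarith))).trans_le (hX.le_pairFactor hα hy hq)

lemma pairFactor_div_pairFactor_le (hX : PeriodicPerturbedNodes N α X) (hα : α < 1 / 2)
    {k k' : ℤ} {y y' : ℝ} (hy : |y - k * gridStep N| ≤ α * gridStep N)
    (hy' : |y' - k' * gridStep N| ≤ α * gridStep N) {q : ℕ} (hq : q ∈ Icc 1 N) :
    pairFactor X k y q / pairFactor X k' y' q ≤ (q + α) ^ 2 / ((q - 2 * α) * q) := by
  have hα0 := hX.nonneg
  have hq' : (1 : ℝ) ≤ q ∧ (q : ℝ) ≤ N := by exact_mod_cast mem_Icc.1 hq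
  have hstep := gridStep_pos N
  have hqα : 0 < q - 2 * α := by linarith
  have hsin_div : ∀ t : ℝ, 0 < t → t ≤ q + α →
      0 < sin (t * gridStep N / 2) ∧
        sin ((q + α) * gridStep N / 2) / sin (t * gridStep N / 2) ≤ (q + α) / t := by
    intro t ht0 ht
    refine ⟨sin_mul_gridStep_div_two_pos ht0 (by linarith), ?_⟩
    have hπ : (q + α) * gridStep N / 2 < π := by
      linarith [add_mul_gridStep_le_pi hα (mem_Icc.1 hq).2, pi_pos]
    refine (sin_div_sin_le_div (by positivity) (by gcongr) hπ).trans_eq ?_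
    field_simp
  obtain ⟨hpos_q, hle_q⟩ := hsin_div q (by linarith) (by linarith)
  obtain ⟨hpos_qα, hle_qα⟩ := hsin_div (q - 2 * α) hqα (by linarith)
  obtain ⟨hpos_top, -⟩ := hsin_div (q + α) (by linarith) le_rfl
  calc pairFactor X k y q / pairFactor X k' y' q
      ≤ sin ((q + α) * gridStep N / 2) ^ 2 /
          (sin ((q - 2 * α) * gridStep N / 2) * sin (q * gridStep N / 2)) :=
        div_le_div₀ (sq_nonneg _) (hX.pairFactor_le hα hy hq) (mul_pos hpos_qα hpos_q)
          ((mul_comm _ _).trans_le (hX.le_pairFactor hα hy' hq))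
    _ = sin ((q + α) * gridStep N / 2) / sin ((q - 2 * α) * gridStep N / 2) *
          (sin ((q + α) * gridStep N / 2) / sin (q * gridStep N / 2)) := by
        rw [sq, mul_div_mul_comm]
    _ ≤ (q + α) / (q - 2 * α) * ((q + α) / q) := by gcongr
    _ = (q + α) ^ 2 / ((q - 2 * α) * q) := by rw [div_mul_div_comm, sq]

lemma abs_shiftedPoint_sub_le (hX : PeriodicPerturbedNodes N α X) (j k : ℤ) :
    |shiftedPoint N X j k - k * gridStep N| ≤ α * gridStep N := by
  convert hX.abs_sub_le j using 2
  rw [shiftedPoint]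
  ring

lemma abs_sin_shiftedPoint_sub_sin_le (hX : PeriodicPerturbedNodes N α X) (j k₁ k₂ : ℤ) :
    |sin ((shiftedPoint N X j k₁ - X k₁) / 2) - sin ((shiftedPoint N X j k₂ - X k₂) / 2)| ≤
      α * gridStep N := by
  refine (abs_sin_sub_sin_le _ _).trans ?_
  have h₁ := abs_le.1 (hX.abs_sub_le k₁)
  have h₂ := abs_le.1 (hX.abs_sub_le k₂)
  rw [abs_le, shiftedPoint, shiftedPoint]
  constructor <;> linarith

lemma abs_sin_shiftedPoint_le (hX : PeriodicPerturbedNodes N α X) (j k : ℤ) :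
    |sin ((shiftedPoint N X j k - X k) / 2)| ≤ α * gridStep N := by
  simpa [shiftedPoint] using hX.abs_sin_shiftedPoint_sub_sin_le j k j

lemma pairFactorRatio_nonneg (hX : PeriodicPerturbedNodes N α X) (hα : α < 1 / 2) (j k : ℤ) :
    0 ≤ pairFactorRatio N X j k :=
  prod_nonneg fun _ hq => div_nonneg
    (hX.pairFactor_pos hα (hX.abs_shiftedPoint_sub_le j k) hq).le
    (hX.pairFactor_pos hα (hX.abs_sub_le j) hq).le

lemma pairFactorRatio_le (hX : PeriodicPerturbedNodes N α X) (hα : α < 1 / 2) (j k : ℤ) :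
    pairFactorRatio N X j k ≤ ∏ m ∈ Icc 1 N, ((m : ℝ) + α) ^ 2 / (((m : ℝ) - 2 * α) * m) :=
  prod_le_prod
    (fun _ hq => div_nonneg (hX.pairFactor_pos hα (hX.abs_shiftedPoint_sub_le j k) hq).le
      (hX.pairFactor_pos hα (hX.abs_sub_le j) hq).le)
    fun _ hq => hX.pairFactor_div_pairFactor_le hα (hX.abs_shiftedPoint_sub_le j k)
      (hX.abs_sub_le j) hq

lemma abs_sin_mul_pairFactorRatio_sub_le (hX : PeriodicPerturbedNodes N α X) (hα : α < 1 / 2)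
    (j k₁ k₂ : ℤ) :
    |sin ((shiftedPoint N X j k₁ - X k₁) / 2) * pairFactorRatio N X j k₁ -
        sin ((shiftedPoint N X j k₂ - X k₂) / 2) * pairFactorRatio N X j k₂| ≤
      α * gridStep N * ∏ m ∈ Icc 1 N, ((m : ℝ) + α) ^ 2 / (((m : ℝ) - 2 * α) * m) :=
  abs_mul_sub_mul_le (hX.pairFactorRatio_nonneg hα j k₁) (hX.pairFactorRatio_nonneg hα j k₂)
    (hX.pairFactorRatio_le hα j k₁) (hX.pairFactorRatio_le hα j k₂)
    (hX.abs_sin_shiftedPoint_le j k₁) (hX.abs_sin_shiftedPoint_le j k₂)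
    (hX.abs_sin_shiftedPoint_sub_sin_le j k₁ k₂)

lemma abs_lagrange_add_lagrange_le (hX : PeriodicPerturbedNodes N α X) (hα : α < 1 / 2)
    {j k₁ k₂ : ℤ} (hj : j ∈ Icc (-(N : ℤ)) N) (hk₁ : k₁ ∈ Icc (-(N : ℤ)) N)
    (hk₂ : k₂ ∈ Icc (-(N : ℤ)) N) (hopp : ((2 * N + 1 : ℕ) : ℤ) ∣ (k₁ - j) + (k₂ - j))
    {d : ℤ} (hd : 1 ≤ d) (hd₁ : min |j - k₁| (2 * N + 1 - |j - k₁|) = d) :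
    |lagrange N X j (shiftedPoint N X j k₁) + lagrange N X j (shiftedPoint N X j k₂)| ≤
      π * α / d * ∏ m ∈ Icc 1 N, ((m : ℝ) + α) ^ 2 / (((m : ℝ) - 2 * α) * m) := by
  set P := ∏ m ∈ Icc 1 N, ((m : ℝ) + α) ^ 2 / (((m : ℝ) - 2 * α) * m)
  have hstep := gridStep_pos N
  have hd_pos : 0 < d * gridStep N / π :=
    div_pos (mul_pos (by exact_mod_cast hd) hstep) pi_pos
  have hw_lower : d * gridStep N / π ≤ |alternatingSine N (k₁ - j)| :=
    mul_gridStep_div_pi_le_abs_alternatingSine (by rwa [abs_sub_comm])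
  have hw_ne : alternatingSine N (k₁ - j) ≠ 0 := abs_pos.1 (hd_pos.trans_le hw_lower)
  have hnum := hX.abs_sin_mul_pairFactorRatio_sub_le hα j k₁ k₂
  rw [lagrange_shiftedPoint_add_lagrange_shiftedPoint hX.add_period hj hk₁ hk₂ hopp hw_ne, abs_div]
  calc _ ≤ α * gridStep N * P / (d * gridStep N / π) :=
        div_le_div₀ ((abs_nonneg _).trans hnum) hnum hd_pos hw_lower
    _ = π * α / d * P := by field_simp

end PeriodicPerturbedNodes

lemma dvd_sub_or_dvd_add_of_min_abs_eq {n a b : ℤ}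
    (h : min |a| (n - |a|) = min |b| (n - |b|)) : n ∣ a - b ∨ n ∣ a + b := by
  have habs : |a| = |b| ∨ |a| + |b| = n := by omega
  rcases habs with habs | habs
  · rcases abs_eq_abs.1 habs with rfl | rfl <;> simp
  · rcases abs_choice a with ha | ha <;> rcases abs_choice b with hb | hb <;>
      rw [ha, hb] at habs <;> subst habs
    · exact .inr dvd_rfl
    · exact .inl dvd_rfl
    · exact .inl ⟨-1, by ring⟩
    · exact .inr ⟨-1, by ring⟩

/-- bound on the paired values of the Lagrange basis polynomial `ℓ_j` at the
two shifted grid points at circular index distance d from j. -/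
theorem lagrange_pair_bound (α : ℝ) (hα0 : 0 ≤ α) (hα : α < 1/2)
    (N : ℕ) (hN : 0 < N)
    (x : ℤ → ℝ) (hx : PerturbedNodes N α x)
    (j : ℤ) (hj : j ∈ Finset.Icc (-(N:ℤ)) (N:ℤ))
    (d : ℤ) (hd1 : 1 ≤ d) (hdN : d ≤ (N:ℤ))
    (k₁ k₂ : ℤ) (hk₁ : k₁ ∈ Finset.Icc (-(N:ℤ)) (N:ℤ)) (hk₂ : k₂ ∈ Finset.Icc (-(N:ℤ)) (N:ℤ))
    (hk₁j : k₁ ≠ j) (hk₂j : k₂ ≠ j) (hk₁₂ : k₁ ≠ k₂)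
    (hd₁ : min |j - k₁| (2*(N:ℤ)+1 - |j - k₁|) = d)
    (hd₂ : min |j - k₂| (2*(N:ℤ)+1 - |j - k₂|) = d) :
    |lagrange N x j (x j + ((k₁ : ℝ) - (j : ℝ)) * (2*π/(2*N+1))) +
        lagrange N x j (x j + ((k₂ : ℝ) - (j : ℝ)) * (2*π/(2*N+1)))| ≤
      (π * α / (d : ℝ)) *
        ∏ m ∈ Finset.Icc 1 N, ((m : ℝ) + α)^2 / (((m : ℝ) - 2*α) * (m : ℝ)) := by
  have hmin : min |k₁ - j| (2 * N + 1 - |k₁ - j|) = min |k₂ - j| (2 * N + 1 - |k₂ - j|) := by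
    rw [abs_sub_comm k₁, abs_sub_comm k₂, hd₁, hd₂]
  have hncong : ¬ (2 * N + 1 : ℤ) ∣ (k₁ - j) - (k₂ - j) := by
    rw [mem_Icc] at hk₁ hk₂
    intro hdvd
    have := Int.eq_zero_of_abs_lt_dvd hdvd (by rw [abs_lt]; omega)
    omega
  have hopp : (2 * N + 1 : ℤ) ∣ (k₁ - j) + (k₂ - j) :=
    (dvd_sub_or_dvd_add_of_min_abs_eq hmin).resolve_left hncong
  have hbound := hx.periodicPerturbedNodes.abs_lagrange_add_lagrange_le hα hj hk₁ hk₂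
    (by exact_mod_cast hopp) hd1 hd₁
  simpa only [lagrange_periodicContinuation x hj, shiftedPoint, periodicContinuation_of_mem x hj,
    gridStep] using hbound
end

section
/- Let 0 < α < 1/2 and let N be a positive integer such that πα · (∏_{m=1}^{N} (m+α)²/((m−2α)m)) · (Σ_{d=1}^{N} 1/d) ≤ 1. Then for every set of α-perturbed nodes x̃_{−N},…,x̃_N, all weights w̃_{−N},…,w̃_N of the unique quadrature rule exact on T_N at these nodes are nonnegative. -/
open Real Finset

/-- `q` is a trigonometric polynomial of degree ≤ N. -/
def IsTrigPoly (N : ℕ) (q : ℝ → ℂ) : Prop :=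
  ∃ c : ℤ → ℂ, ∀ x : ℝ,
    q x = ∑ k ∈ Finset.Icc (-(N:ℤ)) (N:ℤ), c k * Complex.exp (Complex.I * (k : ℂ) * (x : ℂ))

/-- The weights `w` form a quadrature rule at the nodes `x` that is exact on `T_N`. -/
def ExactQuad (N : ℕ) (x : ℤ → ℝ) (w : ℤ → ℝ) : Prop :=
  ∀ q : ℝ → ℂ, IsTrigPoly N q →
    ∑ j ∈ Finset.Icc (-(N:ℤ)) (N:ℤ), (w j : ℂ) * q (x j) = ∫ t in (-π)..π, q t

/-!
Fix `j` and let `p` be the trigonometric nodal polynomial of degree `N` vanishing at all nodes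
except the `j`-th. Both the given rule and the rectangle rule with step `h = 2π / (2N + 1)`
integrate `p` exactly, so `w j * p (x j) = h * ∑ k, p (k * h)`. As `α < 1/2`, `p` has the same sign
at `x j` and at `j * h`, and it remains to see that the term `k = j` dominates the sum. Each factor
of `p (k * h)` is a sine whose argument is known, up to sign, multiples of `π` and an error
`α * h / 2`, from the circular distance of two indices. Every distance `1, …, N` occurs twice, so
`|p (k * h)| / |p (j * h)|` is at most a product of ratios of sines, which monotonicity of
`sin t / t` and Jordan's inequality bound by `(π * α / 2) * ∏ (m + α)² / ((m - 2α) m) / d`,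
with `d` the circular distance from `j` to `k`. Summing over `k ≠ j` gives the condition on `α`.
-/

variable {N : ℕ}

lemma mul_sum_nonneg_of_sum_abs_erase_le {ι R : Type*} [DecidableEq ι] [CommRing R] [LinearOrder R]
    [IsStrictOrderedRing R] {s : Finset ι} {j : ι} (hj : j ∈ s) {a : ι → R}
    (h : ∑ k ∈ s.erase j, |a k| ≤ |a j|) : 0 ≤ a j * ∑ k ∈ s, a k := by
  have hoff : |a j * ∑ k ∈ s.erase j, a k| ≤ a j * a j := by
    rw [abs_mul, ← abs_mul_abs_self (a j)]
    exact mul_le_mul_of_nonneg_left ((abs_sum_le_sum_abs _ _).trans h) (abs_nonneg _)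
  rw [← add_sum_erase _ _ hj, mul_add]
  linarith [neg_abs_le (a j * ∑ k ∈ s.erase j, a k)]

section Sine

lemma mul_sin_le_mul_sin {a b : ℝ} (ha : 0 < a) (hab : a ≤ b) (hb : b ≤ π) :
    a * sin b ≤ b * sin a := by
  have hb0 : 0 < b := ha.trans_le hab
  have hslope : slope sin 0 b ≤ slope sin 0 a :=
    strictConcaveOn_sin_Icc.concaveOn.slope_anti ⟨le_rfl, pi_pos.le⟩
      ⟨⟨ha.le, hab.trans hb⟩, ha.ne'⟩ ⟨⟨hb0.le, hb⟩, hb0.ne'⟩ hab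
  simp only [slope_def_field, sin_zero, sub_zero] at hslope
  rw [div_le_div_iff₀ hb0 ha] at hslope
  linarith

lemma sin_add_sq_le_mul_sin_sub_sq {a m u : ℝ} (ha : 0 ≤ a) (hm : 2 * a < m) (hu : 0 < u)
    (htop : (m + a) * u ≤ π) :
    sin ((m + a) * u) ^ 2 ≤ (m + a) ^ 2 / ((m - 2 * a) * m) * sin ((m - a) * u) ^ 2 := by
  have hmul : (m - a) * sin ((m + a) * u) ≤ (m + a) * sin ((m - a) * u) := by
    have h := mul_sin_le_mul_sin (mul_pos (by linarith : 0 < m - a) hu)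
      (by gcongr; linarith : (m - a) * u ≤ (m + a) * u) htop
    exact le_of_mul_le_mul_left (by linarith) hu
  have hsin : 0 ≤ sin ((m + a) * u) :=
    sin_nonneg_of_nonneg_of_le_pi (mul_nonneg (by linarith) hu.le) htop
  rw [div_mul_eq_mul_div, le_div_iff₀ (mul_pos (by linarith) (by linarith))]
  calc sin ((m + a) * u) ^ 2 * ((m - 2 * a) * m)
      ≤ sin ((m + a) * u) ^ 2 * (m - a) ^ 2 := by gcongr; linarith [sq_nonneg a]
    _ = ((m - a) * sin ((m + a) * u)) ^ 2 := by ring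
    _ ≤ ((m + a) * sin ((m - a) * u)) ^ 2 :=
      pow_le_pow_left₀ (mul_nonneg (by linarith) hsin) hmul 2
    _ = (m + a) ^ 2 * sin ((m - a) * u) ^ 2 := by ring

lemma abs_sin_mem_Icc {y a e : ℝ} (ha : 0 ≤ a) (hae : a + e ≤ π / 2) (hy : |(|y| - a)| ≤ e) :
    |sin y| ∈ Set.Icc (sin (a - e)) (sin (a + e)) := by
  obtain ⟨hlow, hup⟩ := abs_le.1 hy
  have := abs_nonneg y
  rw [abs_sin_eq_sin_abs_of_abs_le_pi (by linarith [pi_pos])]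
  constructor <;> apply sin_le_sin_of_le_of_le_pi_div_two <;> linarith

end Sine

section CircularDistance

/-- The distance between `k` and `l` on the cycle `ℤ / (2 * N + 1)`. -/
def circDist (N : ℕ) (k l : ℤ) : ℕ := ((k - l).bmod (2 * N + 1)).natAbs

lemma bmod_two_mul_add_one_mem_Icc (N : ℕ) (n : ℤ) : n.bmod (2 * N + 1) ∈ Icc (-N : ℤ) N := by
  have hlow := Int.le_bmod (x := n) (m := 2 * N + 1) (by omega)
  have hup := Int.bmod_lt (x := n) (m := 2 * N + 1) (by omega)
  rw [mem_Icc]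
  omega

lemma bmod_two_mul_add_one_eq_self {n : ℤ} (hn : n ∈ Icc (-N : ℤ) N) : n.bmod (2 * N + 1) = n := by
  rw [mem_Icc] at hn
  apply Int.bmod_eq_of_le <;> omega

lemma bmod_sub_bmod_sub_eq_self {l : ℤ} (k : ℤ) (hl : l ∈ Icc (-N : ℤ) N) :
    (k - (k - l).bmod (2 * N + 1)).bmod (2 * N + 1) = l := by
  rw [Int.sub_bmod_bmod, sub_sub_cancel, bmod_two_mul_add_one_eq_self hl]

@[simp]
lemma circDist_self (N : ℕ) (k : ℤ) : circDist N k k = 0 := by simp [circDist]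

lemma circDist_comm (N : ℕ) (k l : ℤ) : circDist N k l = circDist N l k := by
  have hmem := bmod_two_mul_add_one_mem_Icc N (l - k)
  have hneg : -(l - k).bmod (2 * N + 1) ∈ Icc (-N : ℤ) N := by
    rw [mem_Icc] at hmem ⊢
    omega
  have h := Int.sub_bmod_bmod (x := 0) (y := l - k) (n := 2 * N + 1)
  rw [zero_sub, zero_sub, neg_sub, bmod_two_mul_add_one_eq_self hneg] at h
  rw [circDist, circDist, ← h, Int.natAbs_neg]

lemma circDist_le (N : ℕ) (k l : ℤ) : circDist N k l ≤ N := by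
  have hmem := bmod_two_mul_add_one_mem_Icc N (k - l)
  rw [mem_Icc] at hmem
  rw [circDist]
  omega

lemma circDist_pos {k l : ℤ} (hk : k ∈ Icc (-N : ℤ) N) (hl : l ∈ (Icc (-N : ℤ) N).erase k) :
    0 < circDist N k l := by
  obtain ⟨hlk, hl⟩ := mem_erase.1 hl
  refine Int.natAbs_pos.2 fun h => hlk ?_
  rw [← bmod_sub_bmod_sub_eq_self k hl, h, sub_zero, bmod_two_mul_add_one_eq_self hk]

lemma exists_abs_sub_sub_int_mul_eq_circDist (N : ℕ) (k l : ℤ) :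
    ∃ q : ℤ, |k - l - q * (2 * N + 1)| = circDist N k l := by
  refine ⟨(k - l).bdiv (2 * N + 1), ?_⟩
  have h := Int.bmod_add_bdiv (k - l) (2 * N + 1)
  rw [circDist, Int.natCast_natAbs]
  congr 1
  push_cast at h
  linarith

@[to_additive]
lemma prod_erase_zero_natAbs {M : Type*} [CommMonoid M] (N : ℕ) (f : ℕ → M) :
    ∏ n ∈ (Icc (-N : ℤ) N).erase 0, f n.natAbs = (∏ m ∈ Icc 1 N, f m) ^ 2 := by
  induction N with
  | zero => simp
  | succ N ih =>
    have hsplit : (Icc (-(N + 1 : ℕ) : ℤ) (N + 1 : ℕ)).erase 0 =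
        insert (N + 1 : ℤ) (insert (-(N + 1) : ℤ) ((Icc (-N : ℤ) N).erase 0)) := by
      ext n
      simp only [mem_erase, mem_Icc, mem_insert]
      omega
    have hpos : (N + 1 : ℤ).natAbs = N + 1 := by omega
    have hneg : (-(N + 1) : ℤ).natAbs = N + 1 := by omega
    rw [hsplit, prod_insert (by simp; omega), prod_insert (by simp), ih,
      prod_Icc_succ_top (by omega), hpos, hneg, mul_pow, ← mul_assoc, mul_comm, ← sq]

@[to_additive]
lemma prod_erase_circDist {M : Type*} [CommMonoid M] {k : ℤ} (hk : k ∈ Icc (-N : ℤ) N)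
    (f : ℕ → M) :
    ∏ l ∈ (Icc (-N : ℤ) N).erase k, f (circDist N k l) = (∏ m ∈ Icc 1 N, f m) ^ 2 := by
  rw [← prod_erase_zero_natAbs]
  refine prod_nbij' (fun l => (k - l).bmod (2 * N + 1)) (fun n => (k - n).bmod (2 * N + 1))
    (fun l hl => mem_erase.2 ⟨Int.natAbs_pos.1 (circDist_pos hk hl),
      bmod_two_mul_add_one_mem_Icc N _⟩)
    (fun n hn => mem_erase.2 ⟨fun h => ne_of_mem_erase hn ?_, bmod_two_mul_add_one_mem_Icc N _⟩)
    (fun l hl => bmod_sub_bmod_sub_eq_self k (mem_of_mem_erase hl))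
    (fun n hn => bmod_sub_bmod_sub_eq_self k (mem_of_mem_erase hn)) (fun _ _ => rfl)
  rw [← bmod_sub_bmod_sub_eq_self k (mem_of_mem_erase hn), h, sub_self, Int.zero_bmod]

end CircularDistance

section RectangleRule

/-- The spacing `h = 2π / (2N + 1)` of the equispaced nodes `k * h`, `|k| ≤ N`. -/
noncomputable def meshSize (N : ℕ) : ℝ := 2 * π / (2 * N + 1)

lemma meshSize_pos (N : ℕ) : 0 < meshSize N := by
  rw [meshSize]
  positivity

lemma two_mul_add_one_mul_meshSize (N : ℕ) : (2 * N + 1) * meshSize N = 2 * π := by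
  rw [meshSize]
  field_simp

lemma sum_Icc_neg_eq_sum_range {M : Type*} [AddCommMonoid M] (N : ℕ) (f : ℤ → M) :
    ∑ k ∈ Icc (-N : ℤ) N, f k = ∑ i ∈ range (2 * N + 1), f (i - N) := by
  refine sum_nbij' (fun k => (k + N).toNat) (fun i => (i : ℤ) - N) ?_ ?_ ?_ ?_ ?_ <;>
    intro k hk <;> simp only [mem_Icc, mem_range] at hk ⊢
  iterate 4 omega
  congr 1
  omega

lemma sum_zpow_Icc_neg_eq_zero {K : Type*} [Field K] {z : K} (hz : z ≠ 1)
    (hzN : z ^ (2 * N + 1) = 1) : ∑ k ∈ Icc (-N : ℤ) N, z ^ k = 0 := by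
  have hz0 : z ≠ 0 := by
    rintro rfl
    simp at hzN
  calc ∑ k ∈ Icc (-N : ℤ) N, z ^ k
      = z ^ (-N : ℤ) * ∑ i ∈ range (2 * N + 1), z ^ i := by
        simp only [sum_Icc_neg_eq_sum_range, sub_eq_neg_add, zpow_add₀ hz0, zpow_natCast, mul_sum]
    _ = 0 := by rw [geom_sum_eq hz, hzN, sub_self, zero_div, mul_zero]

lemma sum_exp_mesh_eq_zero {m : ℤ} (hm : ¬ (2 * N + 1 : ℤ) ∣ m) :
    ∑ k ∈ Icc (-N : ℤ) N, Complex.exp (Complex.I * m * (k * meshSize N : ℝ)) = 0 := by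
  have hroot := Complex.isPrimitiveRoot_exp (2 * N + 1) (by omega)
  set ζ := Complex.exp (2 * π * Complex.I / (2 * N + 1 : ℕ)) with hζ
  have hterm (k : ℤ) : Complex.exp (Complex.I * m * (k * meshSize N : ℝ)) = (ζ ^ m) ^ k := by
    rw [hζ, ← Complex.exp_int_mul, ← Complex.exp_int_mul, meshSize]
    congr 1
    push_cast
    ring
  simp only [hterm]
  refine sum_zpow_Icc_neg_eq_zero ?_ ?_
  · rwa [Ne, hroot.zpow_eq_one_iff_dvd, Nat.cast_succ, Nat.cast_mul, Nat.cast_ofNat]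
  · rw [← zpow_natCast, zpow_comm, hroot.zpow_eq_one, one_zpow]

lemma integral_exp_I_mul_int_mul {m : ℤ} (hm : m ≠ 0) :
    ∫ t in (-π)..π, Complex.exp (Complex.I * m * t) = 0 := by
  rw [integral_exp_mul_complex (by simpa using hm), div_eq_zero_iff, sub_eq_zero,
    Complex.exp_eq_exp_iff_exists_int]
  exact Or.inl ⟨m, by push_cast; ring⟩

lemma IsTrigPoly.integral_eq_meshSize_mul_sum {q : ℝ → ℂ} (hq : IsTrigPoly N q) :
    ∫ t in (-π)..π, q t = meshSize N * ∑ k ∈ Icc (-N : ℤ) N, q (k * meshSize N) := by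
  obtain ⟨c, hc⟩ := hq
  simp only [hc]
  rw [intervalIntegral.integral_finsetSum
    (fun k _ => Continuous.intervalIntegrable (by fun_prop) _ _), sum_comm, mul_sum]
  refine sum_congr rfl fun m hm => ?_
  rw [intervalIntegral.integral_const_mul, ← mul_sum, mul_left_comm]
  congr 1
  rcases eq_or_ne m 0 with rfl | hm0
  · have hcard : ((N : ℤ) + 1 + N).toNat = 2 * N + 1 := by omega
    have hmesh : (meshSize N : ℂ) * (2 * N + 1) = 2 * π := by
      exact_mod_cast (mul_comm _ _).trans (two_mul_add_one_mul_meshSize N)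
    simp [hcard, hmesh, ← two_mul]
  · have hdvd : ¬ (2 * N + 1 : ℤ) ∣ m := fun h => hm0 <| by
      rw [mem_Icc] at hm
      exact Int.eq_zero_of_abs_lt_dvd h (by rw [abs_lt]; omega)
    rw [integral_exp_I_mul_int_mul hm0, sum_exp_mesh_eq_zero hdvd, mul_zero]

end RectangleRule

section NodalPolynomial

/-- The trigonometric nodal polynomial: the analogue of `Lagrange.nodal`, vanishing at the nodes
`x l`, `l ∈ s` (and their translates by `2π`). -/
noncomputable def trigNodal {ι : Type*} (s : Finset ι) (x : ι → ℝ) (t : ℝ) : ℝ :=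
  ∏ l ∈ s, sin ((t - x l) / 2)

lemma trigNodal_eq_zero {ι : Type*} {s : Finset ι} {i : ι} (hi : i ∈ s) (x : ι → ℝ) :
    trigNodal s x (x i) = 0 :=
  prod_eq_zero hi (by simp)

lemma isTrigPoly_exp_mul_eval {Q : Polynomial ℂ} (hQ : Q.natDegree ≤ 2 * N) :
    IsTrigPoly N fun t =>
      Complex.exp (-(Complex.I * N * t)) * Q.eval (Complex.exp (Complex.I * t)) := by
  refine ⟨fun k => Q.coeff (k + N).toNat, fun t => ?_⟩
  beta_reduce
  rw [Q.eval_eq_sum_range' (Nat.lt_succ_of_le hQ), mul_sum, sum_Icc_neg_eq_sum_range]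
  refine sum_congr rfl fun i _ => ?_
  rw [mul_left_comm, ← Complex.exp_nat_mul, ← Complex.exp_add, sub_add_cancel, Int.toNat_natCast]
  congr 2
  push_cast
  ring

lemma sin_half_sub_eq_exp_mul (a t : ℂ) :
    Complex.sin ((t - a) / 2) = Complex.exp (-(Complex.I * t / 2)) *
      (Complex.exp (-(Complex.I * a / 2)) / (2 * Complex.I) *
        (Complex.exp (Complex.I * t) - Complex.exp (Complex.I * a))) := by
  have ht : Complex.exp (Complex.I * t) = Complex.exp (Complex.I * t / 2) ^ 2 := by
    rw [← Complex.exp_nat_mul]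
    ring_nf
  have ha : Complex.exp (Complex.I * a) = Complex.exp (Complex.I * a / 2) ^ 2 := by
    rw [← Complex.exp_nat_mul]
    ring_nf
  rw [Complex.sin, ht, ha,
    show -((t - a) / 2) * Complex.I = Complex.I * a / 2 + -(Complex.I * t / 2) by ring,
    show (t - a) / 2 * Complex.I = Complex.I * t / 2 + -(Complex.I * a / 2) by ring]
  simp only [Complex.exp_add, Complex.exp_neg]
  field_simp
  rw [Complex.I_sq]
  ring

lemma isTrigPoly_trigNodal {ι : Type*} {s : Finset ι} (hs : #s = 2 * N) (x : ι → ℝ) :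
    IsTrigPoly N fun t => (trigNodal s x t : ℂ) := by
  let Q : Polynomial ℂ := ∏ l ∈ s, .C (Complex.exp (-(Complex.I * x l / 2)) / (2 * Complex.I)) *
    (.X - .C (Complex.exp (Complex.I * x l)))
  have hdeg : Q.natDegree ≤ 2 * N := by
    rw [← hs, card_eq_sum_ones]
    refine (Polynomial.natDegree_prod_le _ _).trans (sum_le_sum fun l _ => ?_)
    exact (Polynomial.natDegree_C_mul_le _ _).trans (Polynomial.natDegree_X_sub_C_le _)
  convert isTrigPoly_exp_mul_eval hdeg using 2 with t
  rw [trigNodal, Complex.ofReal_prod]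
  push_cast
  simp only [sin_half_sub_eq_exp_mul, prod_mul_distrib, prod_const, hs, Q, Polynomial.eval_prod,
    Polynomial.eval_mul, Polynomial.eval_C, Polynomial.eval_sub, Polynomial.eval_X,
    ← Complex.exp_nat_mul]
  congr 2
  push_cast
  ring

lemma ExactQuad.weight_mul_trigNodal {x w : ℤ → ℝ} (hw : ExactQuad N x w) {j : ℤ}
    (hj : j ∈ Icc (-N : ℤ) N) :
    w j * trigNodal ((Icc (-N : ℤ) N).erase j) x (x j) =
      meshSize N * ∑ k ∈ Icc (-N : ℤ) N,
        trigNodal ((Icc (-N : ℤ) N).erase j) x (k * meshSize N) := by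
  have hcard : #((Icc (-N : ℤ) N).erase j) = 2 * N := by
    rw [card_erase_of_mem hj, Int.card_Icc]
    omega
  have htrig := isTrigPoly_trigNodal hcard x
  have hquad := hw _ htrig
  rw [htrig.integral_eq_meshSize_mul_sum, sum_eq_single_of_mem j hj fun i hi hij => by
    rw [trigNodal_eq_zero (mem_erase.2 ⟨hij, hi⟩), Complex.ofReal_zero, mul_zero]] at hquad
  exact_mod_cast hquad

end NodalPolynomial

section CircularSine

variable {α : ℝ}

lemma circDist_add_mul_meshSize_le (hα : α ≤ 1 / 2) (k l : ℤ) :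
    (circDist N k l + α) * meshSize N ≤ π := by
  have hle : (circDist N k l : ℝ) ≤ N := by exact_mod_cast circDist_le N k l
  calc (circDist N k l + α) * meshSize N ≤ (N + 1 / 2) * meshSize N := by
        have := (meshSize_pos N).le
        gcongr
    _ = π := by linarith [two_mul_add_one_mul_meshSize N]

lemma abs_sin_half_mem_Icc_of_abs_sub_le (hα : α ≤ 1 / 2) {k l : ℤ} {t : ℝ}
    (ht : |t - (k - l : ℤ) * meshSize N| ≤ α * meshSize N) :
    |sin (t / 2)| ∈ Set.Icc (sin ((circDist N k l - α) * (meshSize N / 2)))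
      (sin ((circDist N k l + α) * (meshSize N / 2))) := by
  obtain ⟨q, hq⟩ := exists_abs_sub_sub_int_mul_eq_circDist N k l
  have hq' : |(k - l - q * (2 * N + 1) : ℝ)| = circDist N k l := by exact_mod_cast hq
  have hh := meshSize_pos N
  have hperiod : |sin (t / 2)| = |sin (t / 2 - q * π)| := by
    rw [sin_sub_int_mul_pi, abs_mul, abs_zpow, abs_neg, abs_one, one_zpow, one_mul]
  have hcenter : (circDist N k l : ℝ) * (meshSize N / 2) =
      |(k - l) * (meshSize N / 2) - q * π| := by
    rw [← hq', ← abs_of_pos (half_pos hh), ← abs_mul, abs_of_pos (half_pos hh)]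
    congr 1
    linear_combination -(q / 2 : ℝ) * two_mul_add_one_mul_meshSize N
  rw [hperiod, sub_mul, add_mul]
  refine abs_sin_mem_Icc (by positivity) ?_ ?_
  · linarith [circDist_add_mul_meshSize_le (N := N) hα k l]
  · rw [hcenter]
    refine (abs_abs_sub_abs_le _ _).trans ?_
    rw [sub_sub_sub_cancel_right]
    push_cast at ht
    rw [abs_le] at ht ⊢
    constructor <;> linarith

lemma mul_meshSize_div_pi_le_sin (hα0 : 0 ≤ α) (hα : α ≤ 1 / 2) (k l : ℤ) :
    circDist N k l * meshSize N / π ≤ sin ((circDist N k l + α) * (meshSize N / 2)) := by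
  have hh := meshSize_pos N
  calc circDist N k l * meshSize N / π = 2 / π * (circDist N k l * (meshSize N / 2)) := by ring
    _ ≤ 2 / π * ((circDist N k l + α) * (meshSize N / 2)) := by
        gcongr
        linarith
    _ ≤ _ := mul_le_sin (by positivity)
      (by linarith [circDist_add_mul_meshSize_le (N := N) hα k l])

lemma sin_half_mul_sin_half_pos {n : ℤ} (hn0 : n ≠ 0) (hn : |n| ≤ 2 * N) {s t : ℝ}
    (hs : |s - n * meshSize N| < meshSize N) (ht : |t - n * meshSize N| < meshSize N) :
    0 < sin (s / 2) * sin (t / 2) := by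
  have hπ := two_mul_add_one_mul_meshSize N
  have hh := meshSize_pos N
  obtain ⟨hn1, hn2⟩ := abs_le.1 hn
  obtain ⟨hs1, hs2⟩ := abs_lt.1 hs
  obtain ⟨ht1, ht2⟩ := abs_lt.1 ht
  rcases hn0.lt_or_gt with hneg | hpos
  · have hle : (n : ℝ) ≤ -1 := by exact_mod_cast (by omega : n ≤ -1)
    have hge : -(2 * N : ℝ) ≤ n := by exact_mod_cast hn1
    apply mul_pos_of_neg_of_neg <;> apply sin_neg_of_neg_of_neg_pi_lt <;> nlinarith
  · have hge : (1 : ℝ) ≤ n := by exact_mod_cast (by omega : 1 ≤ n)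
    have hle : (n : ℝ) ≤ 2 * N := by exact_mod_cast hn2
    apply mul_pos <;> apply sin_pos_of_pos_of_lt_pi <;> nlinarith

end CircularSine

section PerturbationFactor

variable {α : ℝ}

/-- The factor `∏ (m + α)² / ((m - 2α) m)` by which an `α`-perturbation of the nodes can enlarge
the ratio of two values of the nodal polynomial. -/
noncomputable def perturbationFactor (N : ℕ) (α : ℝ) : ℝ :=
  ∏ m ∈ Icc 1 N, ((m : ℝ) + α) ^ 2 / (((m : ℝ) - 2 * α) * m)

lemma perturbationFactor_nonneg (N : ℕ) (hα : α < 1 / 2) : 0 ≤ perturbationFactor N α := by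
  refine prod_nonneg fun m hm => ?_
  have hm1 : (1 : ℝ) ≤ m := by exact_mod_cast (mem_Icc.1 hm).1
  exact div_nonneg (sq_nonneg _) (mul_nonneg (by linarith) (by linarith))

lemma prod_sin_add_sq_le (hα0 : 0 ≤ α) (hα : α < 1 / 2) :
    (∏ m ∈ Icc 1 N, sin ((m + α) * (meshSize N / 2))) ^ 2 ≤
      perturbationFactor N α * (∏ m ∈ Icc 1 N, sin ((m - α) * (meshSize N / 2))) ^ 2 := by
  rw [perturbationFactor, ← prod_pow, ← prod_pow, ← prod_mul_distrib]
  refine prod_le_prod (fun _ _ => sq_nonneg _) fun m hm => ?_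
  obtain ⟨hm1, hmN⟩ := mem_Icc.1 hm
  have hm1' : (1 : ℝ) ≤ m := by exact_mod_cast hm1
  have hmN' : (m : ℝ) ≤ N := by exact_mod_cast hmN
  have hh := meshSize_pos N
  refine sin_add_sq_le_mul_sin_sub_sq hα0 (by linarith) (half_pos hh) ?_
  nlinarith [two_mul_add_one_mul_meshSize N]

end PerturbationFactor

namespace PerturbedNodes

variable {α : ℝ} {x : ℤ → ℝ} {j k : ℤ}

lemma abs_sub_sub_le (hx : PerturbedNodes N α x) {l : ℤ} (hl : l ∈ Icc (-N : ℤ) N) (k : ℤ) :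
    |k * meshSize N - x l - (k - l : ℤ) * meshSize N| ≤ α * meshSize N := by
  have h : |x l - l * meshSize N| ≤ α * meshSize N := hx l hl
  rw [abs_sub_comm]
  convert h using 2
  push_cast
  ring

lemma abs_sin_half_mem_Icc (hx : PerturbedNodes N α x) (hα : α ≤ 1 / 2) {l : ℤ}
    (hl : l ∈ Icc (-N : ℤ) N) (k : ℤ) :
    |sin ((k * meshSize N - x l) / 2)| ∈
      Set.Icc (sin ((circDist N k l - α) * (meshSize N / 2)))
        (sin ((circDist N k l + α) * (meshSize N / 2))) :=
  abs_sin_half_mem_Icc_of_abs_sub_le hα (hx.abs_sub_sub_le hl k)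

/-- The factor at the omitted node is put back on the left, so that the right-hand side runs over
all circular distances from `k`. -/
lemma abs_trigNodal_erase_mul_le (hx : PerturbedNodes N α x) (hα : α ≤ 1 / 2)
    (hj : j ∈ Icc (-N : ℤ) N) (hk : k ∈ Icc (-N : ℤ) N) :
    |trigNodal ((Icc (-N : ℤ) N).erase j) x (k * meshSize N)| *
        sin ((circDist N j k + α) * (meshSize N / 2)) ≤
      sin (α * (meshSize N / 2)) *
        (∏ m ∈ Icc 1 N, sin ((m + α) * (meshSize N / 2))) ^ 2 := by
  set S : ℕ → ℝ := fun d => sin ((d + α) * (meshSize N / 2)) with hS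
  have hfactor (l : ℤ) (hl : l ∈ Icc (-N : ℤ) N) :
      |sin ((k * meshSize N - x l) / 2)| ≤ S (circDist N k l) :=
    (hx.abs_sin_half_mem_Icc hα hl k).2
  calc |trigNodal ((Icc (-N : ℤ) N).erase j) x (k * meshSize N)| * S (circDist N j k)
      ≤ (∏ l ∈ (Icc (-N : ℤ) N).erase j, S (circDist N k l)) * S (circDist N k j) := by
        rw [circDist_comm N j k, trigNodal, abs_prod]
        exact mul_le_mul_of_nonneg_right
          (prod_le_prod (fun _ _ => abs_nonneg _) fun l hl => hfactor l (mem_of_mem_erase hl))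
          ((abs_nonneg _).trans (hfactor j hj))
    _ = S (circDist N k k) * ∏ l ∈ (Icc (-N : ℤ) N).erase k, S (circDist N k l) := by
        rw [prod_erase_mul _ _ hj, mul_prod_erase _ (fun l => S (circDist N k l)) hk]
    _ = S 0 * (∏ m ∈ Icc 1 N, S m) ^ 2 := by rw [circDist_self, prod_erase_circDist hk]
    _ = _ := by simp only [hS, Nat.cast_zero, zero_add]

lemma le_abs_trigNodal_erase (hx : PerturbedNodes N α x) (hα0 : 0 ≤ α) (hα : α ≤ 1 / 2)
    (hj : j ∈ Icc (-N : ℤ) N) :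
    (∏ m ∈ Icc 1 N, sin ((m - α) * (meshSize N / 2))) ^ 2 ≤
      |trigNodal ((Icc (-N : ℤ) N).erase j) x (j * meshSize N)| := by
  rw [← prod_erase_circDist hj fun d : ℕ => sin ((d - α) * (meshSize N / 2)), trigNodal, abs_prod]
  refine prod_le_prod (fun l hl => ?_) fun l hl =>
    (hx.abs_sin_half_mem_Icc hα (mem_of_mem_erase hl) j).1
  have hd : (1 : ℝ) ≤ circDist N j l := by exact_mod_cast circDist_pos hj hl
  have hh := meshSize_pos N
  refine sin_nonneg_of_nonneg_of_le_pi (mul_nonneg (by linarith) (by positivity)) ?_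
  nlinarith [circDist_add_mul_meshSize_le (N := N) hα j l, mul_nonneg hα0 hh.le, pi_pos]

lemma abs_trigNodal_erase_le (hx : PerturbedNodes N α x) (hα0 : 0 ≤ α) (hα : α < 1 / 2)
    (hj : j ∈ Icc (-N : ℤ) N) (hk : k ∈ (Icc (-N : ℤ) N).erase j) :
    |trigNodal ((Icc (-N : ℤ) N).erase j) x (k * meshSize N)| ≤
      π * α / 2 * perturbationFactor N α * (1 / circDist N j k) *
        |trigNodal ((Icc (-N : ℤ) N).erase j) x (j * meshSize N)| := by
  set p := trigNodal ((Icc (-N : ℤ) N).erase j) x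
  have hh := meshSize_pos N
  have hd : (0 : ℝ) < circDist N j k := by exact_mod_cast circDist_pos hj hk
  have hP := perturbationFactor_nonneg N hα
  have hmain : |p (k * meshSize N)| * (circDist N j k * meshSize N / π) ≤
      α * (meshSize N / 2) * (perturbationFactor N α * |p (j * meshSize N)|) :=
    calc |p (k * meshSize N)| * (circDist N j k * meshSize N / π)
        ≤ |p (k * meshSize N)| * sin ((circDist N j k + α) * (meshSize N / 2)) := by
          gcongr
          exact mul_meshSize_div_pi_le_sin hα0 hα.le j k
      _ ≤ sin (α * (meshSize N / 2)) *
            (∏ m ∈ Icc 1 N, sin ((m + α) * (meshSize N / 2))) ^ 2 :=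
          hx.abs_trigNodal_erase_mul_le hα.le hj (mem_of_mem_erase hk)
      _ ≤ α * (meshSize N / 2) * (∏ m ∈ Icc 1 N, sin ((m + α) * (meshSize N / 2))) ^ 2 := by
          gcongr
          exact sin_le (by positivity)
      _ ≤ α * (meshSize N / 2) * (perturbationFactor N α *
            (∏ m ∈ Icc 1 N, sin ((m - α) * (meshSize N / 2))) ^ 2) := by
          gcongr
          exact prod_sin_add_sq_le hα0 hα
      _ ≤ α * (meshSize N / 2) * (perturbationFactor N α * |p (j * meshSize N)|) := by
          gcongr
          exact hx.le_abs_trigNodal_erase hα0 hα.le hj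
  calc |p (k * meshSize N)|
      ≤ α * (meshSize N / 2) * (perturbationFactor N α * |p (j * meshSize N)|) /
          (circDist N j k * meshSize N / π) := (le_div_iff₀ (by positivity)).2 hmain
    _ = π * α / 2 * perturbationFactor N α * (1 / circDist N j k) * |p (j * meshSize N)| := by
        field_simp

lemma sum_abs_trigNodal_erase_le (hx : PerturbedNodes N α x) (hα0 : 0 ≤ α) (hα : α < 1 / 2)
    (hj : j ∈ Icc (-N : ℤ) N) :
    ∑ k ∈ (Icc (-N : ℤ) N).erase j,
        |trigNodal ((Icc (-N : ℤ) N).erase j) x (k * meshSize N)| ≤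
      π * α * perturbationFactor N α * (∑ d ∈ Icc 1 N, (1 : ℝ) / d) *
        |trigNodal ((Icc (-N : ℤ) N).erase j) x (j * meshSize N)| := by
  refine (sum_le_sum fun k hk => hx.abs_trigNodal_erase_le hα0 hα hj hk).trans_eq ?_
  rw [← sum_mul, ← mul_sum, sum_erase_circDist hj fun d => 1 / (d : ℝ), nsmul_eq_mul]
  ring

lemma trigNodal_mul_trigNodal_pos (hx : PerturbedNodes N α x) (hα : α < 1 / 2)
    (hj : j ∈ Icc (-N : ℤ) N) :
    0 < trigNodal ((Icc (-N : ℤ) N).erase j) x (j * meshSize N) *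
      trigNodal ((Icc (-N : ℤ) N).erase j) x (x j) := by
  rw [trigNodal, trigNodal, ← prod_mul_distrib]
  refine prod_pos fun l hl => ?_
  obtain ⟨hlj, hl⟩ := mem_erase.1 hl
  have hh := meshSize_pos N
  have hgrid := hx.abs_sub_sub_le hl j
  have hnode : |x j - x l - (j - l : ℤ) * meshSize N| ≤ 2 * α * meshSize N := by
    have hself := abs_le.1 (hx.abs_sub_sub_le hj j)
    rw [abs_le] at hgrid ⊢
    rw [sub_self, Int.cast_zero, zero_mul, sub_zero] at hself
    constructor <;> linarith
  refine sin_half_mul_sin_half_pos (sub_ne_zero.2 hlj.symm) ?_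
    (hgrid.trans_lt (by nlinarith)) (hnode.trans_lt (by nlinarith))
  rw [mem_Icc] at hj hl
  rw [abs_le]
  omega

end PerturbedNodes

/-- if πα·(∏_{m=1}^N (m+α)²/((m−2α)m))·(∑_{d=1}^N 1/d) ≤ 1, then all weights
of the exact quadrature rule at any α-perturbed nodes are nonnegative. -/
theorem weights_nonneg_of_small (α : ℝ) (hα0 : 0 < α) (hα : α < 1/2)
    (N : ℕ) (hN : 0 < N)
    (hsmall : π * α * (∏ m ∈ Finset.Icc 1 N, ((m : ℝ) + α)^2 / (((m : ℝ) - 2*α) * (m : ℝ))) *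
        (∑ d ∈ Finset.Icc 1 N, (1 : ℝ) / (d : ℝ)) ≤ 1)
    (x : ℤ → ℝ) (hx : PerturbedNodes N α x)
    (w : ℤ → ℝ) (hw : ExactQuad N x w) :
    ∀ j ∈ Finset.Icc (-(N:ℤ)) (N:ℤ), 0 ≤ w j := by
  intro j hj
  set p := trigNodal ((Icc (-N : ℤ) N).erase j) x
  have hquad : w j * p (x j) = meshSize N * ∑ k ∈ Icc (-N : ℤ) N, p (k * meshSize N) :=
    hw.weight_mul_trigNodal hj
  have hsign : 0 < p (j * meshSize N) * p (x j) := hx.trigNodal_mul_trigNodal_pos hα hj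
  have hdominant : ∑ k ∈ (Icc (-N : ℤ) N).erase j, |p (k * meshSize N)| ≤ |p (j * meshSize N)| :=
    (hx.sum_abs_trigNodal_erase_le hα0.le hα hj).trans
      (mul_le_of_le_one_left (abs_nonneg _) hsmall)
  have hsum : 0 ≤ p (j * meshSize N) * ∑ k ∈ Icc (-N : ℤ) N, p (k * meshSize N) :=
    mul_sum_nonneg_of_sum_abs_erase_le (a := fun k : ℤ => p (k * meshSize N)) hj hdominant
  refine nonneg_of_mul_nonneg_left ?_ hsign
  calc 0 ≤ meshSize N * (p (j * meshSize N) * ∑ k ∈ Icc (-N : ℤ) N, p (k * meshSize N)) :=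
        mul_nonneg (meshSize_pos N).le hsum
    _ = w j * (p (j * meshSize N) * p (x j)) := by linear_combination -p (j * meshSize N) * hquad
end
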